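/- Let n ≥ 1 and let u : ℝⁿ → ℝ be convex, twice continuously differentiable, and Lipschitz continuous. Fix x ∈ ℝⁿ. Then, as s → 1 from the left (with 1/2 < s < 1), (1−s)·D_s u(x) converges to (ω_n/4)·(det D²u(x))^{1/n}, where D²u(x) is the Hessian matrix of u at x and (det D²u(x))^{1/n} is the nonnegative real n-th root of its determinant. -/

import Mathlib

open MeasureTheory

noncomputable def surfOmega (k : ℕ) : ℝ := 2 * Real.pi ^ ((k : ℝ) / 2) / Real.Gamma ((k : ℝ) / 2)

noncomputable def mu1 (s L C : ℝ) : ℝ := L ^ (2 - 2 * s) * (C / 2) ^ (2 * s - 1) / (2 * s - 1)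

noncomputable def C1 (n : ℕ) (s L C : ℝ) : ℝ :=
  (Real.sqrt Real.pi * Real.Gamma (((n : ℝ) - 1) / 2 + s) / Real.Gamma ((n : ℝ) / 2 + s)) *
    (mu1 s L C * surfOmega (n - 1) / 2)

noncomputable def C2 (n : ℕ) (s : ℝ) : ℝ :=
  surfOmega (n - 1) * Real.Gamma (((n : ℝ) - 1) / 2) * Real.Gamma (s + 1 / 2) /
    (2 * Real.Gamma ((n : ℝ) / 2 + s))

noncomputable def mu0 (n : ℕ) (s L C η₀ : ℝ) : ℝ :=
  C1 n s L C ^ (1 - (n : ℝ)) * (C2 n s)⁻¹ * (η₀ / 2) ^ (n : ℝ)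

/-- Second-order increment `δ(u,x,y) = u(x+y) + u(x-y) - 2u(x)`. -/
noncomputable def delta2 {n : ℕ} (u : EuclideanSpace ℝ (Fin n) → ℝ)
    (x y : EuclideanSpace ℝ (Fin n)) : ℝ :=
  u (x + y) + u (x - y) - 2 * u x

/-- Integrand `δ(u,x,y)/|A⁻¹ y|^(n+2s)`. -/
noncomputable def kernelA {n : ℕ} (s : ℝ) (A : Matrix (Fin n) (Fin n) ℝ)
    (u : EuclideanSpace ℝ (Fin n) → ℝ) (x y : EuclideanSpace ℝ (Fin n)) : ℝ :=
  delta2 u x y /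
    ‖(EuclideanSpace.equiv (Fin n) ℝ).symm (A⁻¹.mulVec (EuclideanSpace.equiv (Fin n) ℝ y))‖ ^
      ((n : ℝ) + 2 * s)

/-- The linear operator `L_A u(x) = (1/2) ∫ δ(u,x,y)/|A⁻¹ y|^(n+2s) dy`. -/
noncomputable def LA {n : ℕ} (s : ℝ) (A : Matrix (Fin n) (Fin n) ℝ)
    (u : EuclideanSpace ℝ (Fin n) → ℝ) (x : EuclideanSpace ℝ (Fin n)) : ℝ :=
  (1 / 2) * ∫ y, kernelA s A u x y


open Matrix Filter

/-- Hessian matrix of `u` at `x`, with entries the second partial derivatives. -/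
noncomputable def hess {n : ℕ} (u : EuclideanSpace ℝ (Fin n) → ℝ)
    (x : EuclideanSpace ℝ (Fin n)) : Matrix (Fin n) (Fin n) ℝ :=
  Matrix.of fun i j =>
    fderiv ℝ (fun z => fderiv ℝ u z (EuclideanSpace.single j (1 : ℝ))) x
      (EuclideanSpace.single i (1 : ℝ))

open scoped ENNReal NNReal Topology RealInnerProductSpace

/-!
For `det A = 1` the change of variables `y = A z` gives
`L_A u(x) = ½ ∫ δ(u, x, A z) / |z| ^ (n + 2s) dz`. As `s → 1`, the kernel `(1 - s) |z| ^ (-n - 2s)`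
concentrates at the origin, where `δ(u, x, A z)` is the quadratic form of `A D²u(x) A` up to
`o(|z|²)`.

Upper bound: if `A` is the inverse square root of `D²u(x)`, normalised to determinant one (after
adding `ε • 1` in the degenerate case), this form is at most about `(det D²u(x)) ^ (1 / n) |z|²`.

Lower bound: let `B` be that optimal matrix. Convexity propagates the behaviour near the origin to
`δ(u, x, B z) ≥ c min(|z|, ρ)²` for all `z`. Any competitor `A` equals `B T` with `T = B⁻¹ A` volume
preserving, and a rearrangement argument shows that, among volume-preserving `T`, the integral
`∫ min(|T z|, ρ)² / |z| ^ (n + 2s) dz` is smallest for the identity. So the bound is uniform in `A`.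
-/

section Rearrangement

theorem setLIntegral_le_of_measure_sdiff_le {α : Type*} [MeasurableSpace α] {μ : Measure α}
    {f : α → ℝ≥0∞} {s t : Set α} {c : ℝ≥0∞} (hs : MeasurableSet s) (ht : MeasurableSet t)
    (hst : μ (s \ t) ≤ μ (t \ s)) (hfs : ∀ a ∈ s \ t, f a ≤ c) (hft : ∀ a ∈ t \ s, c ≤ f a) :
    ∫⁻ a in s, f a ∂μ ≤ ∫⁻ a in t, f a ∂μ := by
  rw [← lintegral_inter_add_sdiff f s ht, ← lintegral_inter_add_sdiff f t hs, Set.inter_comm t s]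
  gcongr 1
  calc ∫⁻ a in s \ t, f a ∂μ
      ≤ ∫⁻ _ in s \ t, c ∂μ := setLIntegral_mono measurable_const hfs
    _ = c * μ (s \ t) := setLIntegral_const _ _
    _ ≤ c * μ (t \ s) := by gcongr
    _ = ∫⁻ _ in t \ s, c ∂μ := (setLIntegral_const _ _).symm
    _ ≤ ∫⁻ a in t \ s, f a ∂μ := setLIntegral_mono' (ht.diff hs) hft

variable {E : Type*} [NormedAddCommGroup E] [ProperSpace E] [MeasurableSpace E]
  {μ : Measure E} [IsFiniteMeasureOnCompacts μ]

theorem measure_nnnorm_notMem_lt_top {U : Set ℝ≥0} (hU : IsUpperSet U) (hne : U.Nonempty) :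
    μ {z : E | ‖z‖₊ ∉ U} < ∞ := by
  obtain ⟨r, hr⟩ := hne
  refine (measure_mono fun z hz => ?_).trans_lt
    (measure_closedBall_lt_top (μ := μ) (x := (0 : E)) (r := r))
  rw [mem_closedBall_zero_iff]
  exact (lt_of_not_ge fun h => hz (hU h hr)).le

variable [OpensMeasurableSpace E] {T : E → E} {k : ℝ≥0 → ℝ≥0∞}

-- The sets removed from the whole space on the two sides have equal measure, and the ball is the
-- one that removes the largest values of the kernel.
theorem setLIntegral_nnnorm_mem_upperSet_le (hT : MeasurePreserving T μ μ) (hk : Antitone k)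
    {U : Set ℝ≥0} (hU : IsUpperSet U) :
    ∫⁻ z in {z | ‖z‖₊ ∈ U}, k ‖z‖₊ ∂μ ≤ ∫⁻ z in {z | ‖T z‖₊ ∈ U}, k ‖z‖₊ ∂μ := by
  rcases U.eq_empty_or_nonempty with rfl | hne
  · simp
  have hs : MeasurableSet {z : E | ‖z‖₊ ∈ U} :=
    measurable_nnnorm hU.ordConnected.measurableSet
  have ht : MeasurableSet {z : E | ‖T z‖₊ ∈ U} := hT.measurable hs
  have hfin := measure_nnnorm_notMem_lt_top (μ := μ) hU hne
  have hcompl : μ {z | ‖z‖₊ ∈ U}ᶜ = μ {z | ‖T z‖₊ ∈ U}ᶜ :=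
    (hT.measure_preimage hs.compl.nullMeasurableSet).symm
  refine setLIntegral_le_of_measure_sdiff_le (c := ⨆ r ∈ U, k r) hs ht ?_
    (fun z hz => le_iSup₂ (f := fun r (_ : r ∈ U) => k r) ‖z‖₊ hz.1)
    (fun z hz => iSup₂_le fun r hr => hk (lt_of_not_ge fun h => hz.2 (hU h hr)).le)
  have h := measure_sdiff_symm hs.compl.nullMeasurableSet ht.compl.nullMeasurableSet hcompl
    (measure_ne_top_of_subset Set.inter_subset_left hfin.ne)
  simp only [compl_sdiff_compl] at h
  exact h.ge

theorem lintegral_antitone_nnnorm_mul_monotone_nnnorm_le (hT : MeasurePreserving T μ μ)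
    (hk : Antitone k) {φ : ℝ≥0 → ℝ≥0} (hφ : Monotone φ) :
    ∫⁻ z, k ‖z‖₊ * φ ‖z‖₊ ∂μ ≤ ∫⁻ z, k ‖z‖₊ * φ ‖T z‖₊ ∂μ := by
  have hkm : Measurable fun z : E => k ‖z‖₊ := hk.measurable.comp measurable_nnnorm
  have hφm : Measurable fun z : E => φ ‖z‖₊ := hφ.measurable.comp measurable_nnnorm
  have layercake (f : E → ℝ≥0) (hf : Measurable f) : ∫⁻ z, k ‖z‖₊ * f z ∂μ =
      ∫⁻ t in Set.Ioi (0 : ℝ), ∫⁻ z in {z | t < f z}, k ‖z‖₊ ∂μ := by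
    have h := lintegral_eq_lintegral_meas_lt (μ.withDensity fun z => k ‖z‖₊)
      (f := fun z => (f z : ℝ)) (.of_forall fun z => (f z).2) (by fun_prop)
    rw [lintegral_withDensity_eq_lintegral_mul _ hkm (by fun_prop)] at h
    simpa [withDensity_apply _ (measurableSet_lt measurable_const hf.coe_nnreal_real)] using h
  rw [layercake _ hφm, layercake (fun z => φ ‖T z‖₊) (hφm.comp hT.measurable)]
  refine lintegral_mono fun t => setLIntegral_nnnorm_mem_upperSet_le hT hk (U := {r | t < φ r}) ?_
  exact fun a b hab ha => lt_of_lt_of_le ha (NNReal.coe_le_coe.2 (hφ hab))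

end Rearrangement

section RadialKernel

variable {E : Type*} [NormedAddCommGroup E] [NormedSpace ℝ E]

local notation "dim" => Module.finrank ℝ E

section

variable {s : ℝ} {j : ℕ}

theorem norm_pow_div_norm_rpow (h : j < dim + 2 * s) (z : E) :
    ‖z‖ ^ j / ‖z‖ ^ (dim + 2 * s) = ‖z‖ ^ (j - 2 * s - dim) := by
  rw [← Real.rpow_natCast, ← Real.rpow_sub' (norm_nonneg z) (by linarith)]
  congr 1
  ring

theorem div_norm_rpow_le {b c : ℝ} (h : j < dim + 2 * s) {z : E} (hb : b ≤ c * ‖z‖ ^ j) :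
    b / ‖z‖ ^ (dim + 2 * s) ≤ c * ‖z‖ ^ (j - 2 * s - dim) := by
  rw [← norm_pow_div_norm_rpow h, ← mul_div_assoc]
  gcongr

theorem integrableOn_div_norm_rpow [MeasurableSpace E] [OpensMeasurableSpace E] {μ : Measure E}
    {f : E → ℝ} {c : ℝ} {S : Set E} (hS : MeasurableSet S) (hfm : AEStronglyMeasurable f μ)
    (hf : 0 ≤ f) (h : j < dim + 2 * s) (hfS : ∀ z ∈ S, f z ≤ c * ‖z‖ ^ j)
    (hint : IntegrableOn (fun z => ‖z‖ ^ (j - 2 * s - dim)) S μ) :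
    IntegrableOn (fun z => f z / ‖z‖ ^ (dim + 2 * s)) S μ := by
  refine (hint.const_mul c).mono' ?_ ?_
  · exact (hfm.div₀ (by fun_prop : Measurable _).aestronglyMeasurable).restrict
  · refine (ae_restrict_mem hS).mono fun z hz => ?_
    rw [Real.norm_of_nonneg (div_nonneg (hf z) (by positivity))]
    exact div_norm_rpow_le h (hfS z hz)

end

variable [FiniteDimensional ℝ E] [Nontrivial E]

theorem two_lt_finrank_add_two_mul {s : ℝ} (hs : 1 / 2 < s) : (2 : ℕ) < dim + 2 * s := by
  have : (1 : ℝ) ≤ dim := by exact_mod_cast Module.finrank_pos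
  push_cast
  linarith

variable (E) in
theorem pow_finrank_smul_indicator_rpow_eqOn (S : Set ℝ) (a : ℝ) :
    Set.EqOn (fun y : ℝ => y ^ (dim - 1) • S.indicator (· ^ (a - dim)) y)
      (S.indicator (· ^ (a - 1))) (Set.Ioi 0) := by
  intro y hy
  have hpow : y ^ (dim - 1) * y ^ (a - dim) = y ^ (a - 1) := by
    rw [← Real.rpow_natCast, ← Real.rpow_add hy, Nat.cast_sub Module.finrank_pos]
    congr 1
    push_cast
    ring
  by_cases hyS : y ∈ S <;> simp [hyS, hpow]

variable [MeasurableSpace E] [BorelSpace E] (μ : Measure E) [μ.IsAddHaarMeasure]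

theorem integrableOn_norm_rpow_sub_finrank_iff {S : Set ℝ} (hS : MeasurableSet S) (a : ℝ) :
    IntegrableOn (fun z : E => ‖z‖ ^ (a - dim)) (norm ⁻¹' S) μ ↔
      IntegrableOn (fun y : ℝ => y ^ (a - 1)) (S ∩ Set.Ioi 0) := by
  rw [← integrable_indicator_iff (measurable_norm hS)]
  refine (integrable_fun_norm_addHaar μ (f := S.indicator (· ^ (a - dim)))).trans ?_
  rw [integrableOn_congr_fun (pow_finrank_smul_indicator_rpow_eqOn E S a) measurableSet_Ioi,
    IntegrableOn, integrable_indicator_iff hS, IntegrableOn, Measure.restrict_restrict hS,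
    IntegrableOn]

theorem setIntegral_norm_rpow_sub_finrank {S : Set ℝ} (hS : MeasurableSet S) (a : ℝ) :
    ∫ z in norm ⁻¹' S, ‖z‖ ^ (a - dim) ∂μ =
      dim * μ.real (Metric.ball 0 1) * ∫ y in S ∩ Set.Ioi 0, y ^ (a - 1) := by
  rw [← integral_indicator (measurable_norm hS)]
  refine (integral_fun_norm_addHaar μ (S.indicator (· ^ (a - dim)))).trans ?_
  rw [setIntegral_congr_fun measurableSet_Ioi (pow_finrank_smul_indicator_rpow_eqOn E S a),
    integral_indicator hS, Measure.restrict_restrict hS, nsmul_eq_mul, smul_eq_mul, mul_assoc]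

theorem integrableOn_preimage_norm_Iic_rpow {a r : ℝ} (ha : 0 < a) (hr : 0 ≤ r) :
    IntegrableOn (fun z : E => ‖z‖ ^ (a - dim)) (norm ⁻¹' Set.Iic r) μ := by
  rw [integrableOn_norm_rpow_sub_finrank_iff μ measurableSet_Iic, Set.inter_comm, Set.Ioi_inter_Iic,
    ← intervalIntegrable_iff_integrableOn_Ioc_of_le hr]
  exact intervalIntegral.intervalIntegrable_rpow' (by linarith)

theorem setIntegral_preimage_norm_Iic_rpow {a r : ℝ} (ha : 0 < a) (hr : 0 ≤ r) :
    ∫ z in norm ⁻¹' Set.Iic r, ‖z‖ ^ (a - dim) ∂μ =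
      dim * μ.real (Metric.ball 0 1) * (r ^ a / a) := by
  rw [setIntegral_norm_rpow_sub_finrank μ measurableSet_Iic, Set.inter_comm, Set.Ioi_inter_Iic,
    ← intervalIntegral.integral_of_le hr, integral_rpow (.inl (by linarith)), sub_add_cancel,
    Real.zero_rpow ha.ne', sub_zero]

theorem integrableOn_preimage_norm_Ioi_rpow {a r : ℝ} (ha : a < 0) (hr : 0 < r) :
    IntegrableOn (fun z : E => ‖z‖ ^ (a - dim)) (norm ⁻¹' Set.Ioi r) μ := by
  rw [integrableOn_norm_rpow_sub_finrank_iff μ measurableSet_Ioi, Set.Ioi_inter_Ioi,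
    max_eq_left hr.le]
  exact integrableOn_Ioi_rpow_of_lt (by linarith) hr

theorem setIntegral_preimage_norm_Ioi_rpow {a r : ℝ} (ha : a < 0) (hr : 0 < r) :
    ∫ z in norm ⁻¹' Set.Ioi r, ‖z‖ ^ (a - dim) ∂μ =
      dim * μ.real (Metric.ball 0 1) * (-r ^ a / a) := by
  rw [setIntegral_norm_rpow_sub_finrank μ measurableSet_Ioi, Set.Ioi_inter_Ioi, max_eq_left hr.le,
    integral_Ioi_rpow_of_lt (by linarith) hr, sub_add_cancel]

variable {μ} {s b c r ρ : ℝ} {f : E → ℝ} {T : E → E}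

theorem integrableOn_Iic_div_norm_rpow (hs : s ∈ Set.Ioo (1 / 2) 1) (hr : 0 ≤ r)
    (hfm : AEStronglyMeasurable f μ) (hf : 0 ≤ f) (hnear : ∀ z, ‖z‖ ≤ r → f z ≤ c * ‖z‖ ^ 2) :
    IntegrableOn (fun z => f z / ‖z‖ ^ (dim + 2 * s)) (norm ⁻¹' Set.Iic r) μ :=
  integrableOn_div_norm_rpow (measurable_norm measurableSet_Iic) hfm hf
    (two_lt_finrank_add_two_mul hs.1) hnear
    (integrableOn_preimage_norm_Iic_rpow μ (by push_cast; linarith [hs.2]) hr)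

theorem integrableOn_Ioi_div_norm_rpow (hs : 1 / 2 < s) (hr : 0 < r)
    (hfm : AEStronglyMeasurable f μ) (hf : 0 ≤ f) (hfar : ∀ z, r < ‖z‖ → f z ≤ b * ‖z‖) :
    IntegrableOn (fun z => f z / ‖z‖ ^ (dim + 2 * s)) (norm ⁻¹' Set.Ioi r) μ :=
  integrableOn_div_norm_rpow (j := 1) (measurable_norm measurableSet_Ioi) hfm hf
    (lt_trans (by norm_num) (two_lt_finrank_add_two_mul hs)) (by simpa using hfar)
    (integrableOn_preimage_norm_Ioi_rpow μ (by push_cast; linarith) hr)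

theorem setIntegral_Iic_div_norm_rpow_le (hs : s ∈ Set.Ioo (1 / 2) 1) (hr : 0 ≤ r)
    (hfm : AEStronglyMeasurable f μ) (hf : 0 ≤ f) (hnear : ∀ z, ‖z‖ ≤ r → f z ≤ c * ‖z‖ ^ 2) :
    ∫ z in norm ⁻¹' Set.Iic r, f z / ‖z‖ ^ (dim + 2 * s) ∂μ ≤
      c * (dim * μ.real (Metric.ball 0 1) * (r ^ (2 - 2 * s) / (2 - 2 * s))) := by
  have hexp : (0 : ℝ) < (2 : ℕ) - 2 * s := by push_cast; linarith [hs.2]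
  have h := setIntegral_mono_on (integrableOn_Iic_div_norm_rpow hs hr hfm hf hnear)
    ((integrableOn_preimage_norm_Iic_rpow μ hexp hr).const_mul c)
    (measurable_norm measurableSet_Iic)
    fun z hz => div_norm_rpow_le (two_lt_finrank_add_two_mul hs.1) (hnear z hz)
  rwa [integral_const_mul, setIntegral_preimage_norm_Iic_rpow μ hexp hr, Nat.cast_ofNat] at h

theorem setIntegral_Ioi_div_norm_rpow_le (hs : 1 / 2 < s) (hr : 0 < r)
    (hfm : AEStronglyMeasurable f μ) (hf : 0 ≤ f) (hfar : ∀ z, r < ‖z‖ → f z ≤ b * ‖z‖) :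
    ∫ z in norm ⁻¹' Set.Ioi r, f z / ‖z‖ ^ (dim + 2 * s) ∂μ ≤
      b * (dim * μ.real (Metric.ball 0 1) * (r ^ (1 - 2 * s) / (2 * s - 1))) := by
  have hexp : (1 : ℕ) - 2 * s < 0 := by push_cast; linarith
  have h := setIntegral_mono_on (integrableOn_Ioi_div_norm_rpow hs hr hfm hf hfar)
    ((integrableOn_preimage_norm_Ioi_rpow μ hexp hr).const_mul b)
    (measurable_norm measurableSet_Ioi)
    fun z hz => div_norm_rpow_le (j := 1)
      (lt_trans (by norm_num) (two_lt_finrank_add_two_mul hs)) (by simpa using hfar z hz)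
  rwa [integral_const_mul, setIntegral_preimage_norm_Ioi_rpow μ hexp hr, Nat.cast_one,
    neg_div, ← div_neg, neg_sub] at h

theorem integrable_div_norm_rpow (hs : s ∈ Set.Ioo (1 / 2) 1) (hr : 0 < r)
    (hfm : AEStronglyMeasurable f μ) (hf : 0 ≤ f) (hnear : ∀ z, ‖z‖ ≤ r → f z ≤ c * ‖z‖ ^ 2)
    (hfar : ∀ z, r < ‖z‖ → f z ≤ b * ‖z‖) :
    Integrable (fun z => f z / ‖z‖ ^ (dim + 2 * s)) μ := by
  have h := (integrableOn_Iic_div_norm_rpow hs hr.le hfm hf hnear).union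
    (integrableOn_Ioi_div_norm_rpow hs.1 hr hfm hf hfar)
  rwa [← Set.preimage_union, Set.Iic_union_Ioi, Set.preimage_univ, integrableOn_univ] at h

theorem integral_div_norm_rpow_le (hs : s ∈ Set.Ioo (1 / 2) 1) (hr : 0 < r)
    (hfm : AEStronglyMeasurable f μ) (hf : 0 ≤ f) (hnear : ∀ z, ‖z‖ ≤ r → f z ≤ c * ‖z‖ ^ 2)
    (hfar : ∀ z, r < ‖z‖ → f z ≤ b * ‖z‖) :
    ∫ z, f z / ‖z‖ ^ (dim + 2 * s) ∂μ ≤ dim * μ.real (Metric.ball 0 1) *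
      (c * (r ^ (2 - 2 * s) / (2 - 2 * s)) + b * (r ^ (1 - 2 * s) / (2 * s - 1))) := by
  rw [← integral_add_compl (measurable_norm (measurableSet_Iic (a := r)))
    (integrable_div_norm_rpow hs hr hfm hf hnear hfar), ← Set.preimage_compl, Set.compl_Iic]
  linarith [setIntegral_Iic_div_norm_rpow_le hs hr.le hfm hf hnear,
    setIntegral_Ioi_div_norm_rpow_le hs.1 hr hfm hf hfar]

theorem lintegral_ofReal_monotone_div_norm_rpow_le {p : ℝ} (hp : 0 ≤ p)
    (hT : MeasurePreserving T μ μ) {φ : ℝ≥0 → ℝ≥0} (hφ : Monotone φ) :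
    ∫⁻ z, ENNReal.ofReal (φ ‖z‖₊ / ‖z‖ ^ p) ∂μ ≤
      ∫⁻ z, ENNReal.ofReal (φ ‖T z‖₊ / ‖z‖ ^ p) ∂μ := by
  have hk : Antitone fun t : ℝ≥0 => (t : ℝ≥0∞) ^ (-p) := fun a b hab =>
    by simpa only [ENNReal.rpow_neg, ENNReal.inv_le_inv] using
      ENNReal.rpow_le_rpow (ENNReal.coe_le_coe.2 hab) hp
  have key (g : E → ℝ≥0) : ∫⁻ z, ENNReal.ofReal (g z / ‖z‖ ^ p) ∂μ =
      ∫⁻ z, (‖z‖₊ : ℝ≥0∞) ^ (-p) * g z ∂μ := by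
    refine lintegral_congr_ae ((Measure.ae_ne μ 0).mono fun z hz => ?_)
    beta_reduce
    rw [div_eq_inv_mul, ENNReal.ofReal_mul (by positivity), ENNReal.ofReal_coe_nnreal,
      ← Real.rpow_neg (norm_nonneg z), ← ENNReal.ofReal_rpow_of_pos (norm_pos_iff.2 hz),
      ofReal_norm, enorm_eq_nnnorm]
  rw [key, key fun z => φ ‖T z‖₊]
  exact lintegral_antitone_nnnorm_mul_monotone_nnnorm_le hT hk hφ

theorem ofReal_le_lintegral_min_norm_div_norm_rpow (hs : s ∈ Set.Ioo (1 / 2) 1) (c ρ : ℝ≥0) :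
    ENNReal.ofReal (c * (dim * μ.real (Metric.ball 0 1) * (ρ ^ (2 - 2 * s) / (2 - 2 * s)))) ≤
      ∫⁻ z, ENNReal.ofReal ((c * min ‖z‖₊ ρ ^ 2 : ℝ≥0) / ‖z‖ ^ (dim + 2 * s)) ∂μ := by
  have hexp : (0 : ℝ) < (2 : ℕ) - 2 * s := by push_cast; linarith [hs.2]
  calc ENNReal.ofReal (c * (dim * μ.real (Metric.ball 0 1) * (ρ ^ (2 - 2 * s) / (2 - 2 * s))))
      = ∫⁻ z in norm ⁻¹' Set.Iic (ρ : ℝ),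
          ENNReal.ofReal (c * ‖z‖ ^ ((2 : ℕ) - 2 * s - dim)) ∂μ := by
        rw [← ofReal_integral_eq_lintegral_ofReal
          ((integrableOn_preimage_norm_Iic_rpow μ hexp ρ.coe_nonneg).const_mul (c : ℝ))
          (.of_forall fun z => by positivity), integral_const_mul,
          setIntegral_preimage_norm_Iic_rpow μ hexp ρ.coe_nonneg, Nat.cast_ofNat]
    _ = ∫⁻ z in norm ⁻¹' Set.Iic (ρ : ℝ),
          ENNReal.ofReal ((c * min ‖z‖₊ ρ ^ 2 : ℝ≥0) / ‖z‖ ^ (dim + 2 * s)) ∂μ := by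
        refine setLIntegral_congr_fun (measurable_norm measurableSet_Iic) fun z hz => ?_
        rw [min_eq_left (show ‖z‖₊ ≤ ρ from hz), NNReal.coe_mul, NNReal.coe_pow, coe_nnnorm,
          mul_div_assoc, norm_pow_div_norm_rpow (two_lt_finrank_add_two_mul hs.1)]
    _ ≤ ∫⁻ z, ENNReal.ofReal ((c * min ‖z‖₊ ρ ^ 2 : ℝ≥0) / ‖z‖ ^ (dim + 2 * s)) ∂μ :=
        setLIntegral_le_lintegral _ _

theorem le_integral_div_norm_rpow (hs : s ∈ Set.Ioo (1 / 2) 1) (hT : MeasurePreserving T μ μ)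
    (hc : 0 ≤ c) (hρ : 0 ≤ ρ) (hle : ∀ z, c * min ‖T z‖ ρ ^ 2 ≤ f z)
    (hint : Integrable (fun z => f z / ‖z‖ ^ (dim + 2 * s)) μ) :
    c * (dim * μ.real (Metric.ball 0 1) * (ρ ^ (2 - 2 * s) / (2 - 2 * s))) ≤
      ∫ z, f z / ‖z‖ ^ (dim + 2 * s) ∂μ := by
  lift c to ℝ≥0 using hc
  lift ρ to ℝ≥0 using hρ
  have hφ : Monotone fun t : ℝ≥0 => c * min t ρ ^ 2 := fun a b hab => by beta_reduce; gcongr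
  have hf (z : E) : 0 ≤ f z / ‖z‖ ^ (dim + 2 * s) :=
    div_nonneg (le_trans (by positivity) (hle z)) (by positivity)
  rw [← ENNReal.ofReal_le_ofReal_iff (integral_nonneg hf),
    ofReal_integral_eq_lintegral_ofReal hint (.of_forall hf)]
  calc _ ≤ ∫⁻ z, ENNReal.ofReal ((c * min ‖z‖₊ ρ ^ 2 : ℝ≥0) / ‖z‖ ^ (dim + 2 * s)) ∂μ :=
        ofReal_le_lintegral_min_norm_div_norm_rpow hs c ρ
    _ ≤ ∫⁻ z, ENNReal.ofReal ((c * min ‖T z‖₊ ρ ^ 2 : ℝ≥0) / ‖z‖ ^ (dim + 2 * s)) ∂μ :=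
        lintegral_ofReal_monotone_div_norm_rpow_le (by linarith [hs.1]) hT hφ
    _ ≤ ∫⁻ z, ENNReal.ofReal (f z / ‖z‖ ^ (dim + 2 * s)) ∂μ := by
        gcongr with z
        exact_mod_cast hle z

end RadialKernel

section SecondOrderTaylor

open Asymptotics

variable {E F : Type*} [NormedAddCommGroup E] [NormedSpace ℝ E] [NormedAddCommGroup F]
  [NormedSpace ℝ F] {f : E → F} {x : E}

theorem isLittleO_taylor_second_order (hf : ∀ᶠ z in 𝓝 x, DifferentiableAt ℝ f z)
    (hf' : DifferentiableAt ℝ (fderiv ℝ f) x) :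
    (fun y => f (x + y) - f x - fderiv ℝ f x y - (2⁻¹ : ℝ) • fderiv ℝ (fderiv ℝ f) x y y)
      =o[𝓝 0] fun y => ‖y‖ ^ 2 := by
  set B := fderiv ℝ (fderiv ℝ f) x
  have hsymm (v w : E) : B v w = B w v :=
    second_derivative_symmetric_of_eventually (hf.mono fun _ h => h.hasFDerivAt)
      hf'.hasFDerivAt v w
  obtain ⟨r, hr, hball⟩ := Metric.eventually_nhds_iff_ball.1 hf
  have hderiv : ∀ y ∈ Metric.ball (0 : E) r, HasFDerivWithinAt
      (fun y => f (x + y) - f x - fderiv ℝ f x y - (2⁻¹ : ℝ) • B y y)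
      (fderiv ℝ f (x + y) - fderiv ℝ f x - B y) (Metric.ball 0 r) y := by
    intro y hy
    have hshift := hasFDerivAt_comp_add_left x |>.2
      (hball (x + y) (by simpa using hy)).hasFDerivAt
    have hquad := (B.hasFDerivAt (x := y)).clm_apply (hasFDerivAt_id y)
    refine (((hshift.sub_const (f x)).sub (fderiv ℝ f x).hasFDerivAt).sub
      (hquad.const_smul (2⁻¹ : ℝ))).hasFDerivWithinAt.congr_fderiv ?_
    ext v
    simp [hsymm v y, ← add_smul, ← two_mul]
  have hlin : (fun y => fderiv ℝ f (x + y) - fderiv ℝ f x - B y) =o[𝓝[Metric.ball 0 r] 0]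
      fun y => ‖y - 0‖ ^ 1 := by
    simpa using ((hasFDerivAt_iff_isLittleO_nhds_zero.1 hf'.hasFDerivAt).mono
      nhdsWithin_le_nhds).norm_right
  simpa [nhdsWithin_eq_nhds.2 (Metric.ball_mem_nhds (0 : E) hr)] using
    (convex_ball (0 : E) r).isLittleO_pow_succ (Metric.mem_ball_self hr) hderiv hlin

theorem isLittleO_symmetric_second_difference (hf : ∀ᶠ z in 𝓝 x, DifferentiableAt ℝ f z)
    (hf' : DifferentiableAt ℝ (fderiv ℝ f) x) :
    (fun y => f (x + y) + f (x - y) - (2 : ℝ) • f x - fderiv ℝ (fderiv ℝ f) x y y)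
      =o[𝓝 0] fun y => ‖y‖ ^ 2 := by
  have hpos := isLittleO_taylor_second_order hf hf'
  have hneg := hpos.comp_tendsto (k := fun y : E => -y) (continuous_neg.tendsto' 0 0 neg_zero)
  refine (hpos.add (hneg.congr_right fun y => by simp)).congr_left fun y => ?_
  simp only [Function.comp_apply, map_neg, _root_.neg_apply, ← sub_eq_add_neg]
  module

end SecondOrderTaylor

section EuclideanMatrix

variable {ι : Type*} [Fintype ι] [DecidableEq ι] {A P : Matrix ι ι ℝ}

theorem measurePreserving_toEuclideanCLM (hA : |A.det| = 1) :
    MeasurePreserving (toEuclideanCLM (𝕜 := ℝ) A) volume volume := by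
  refine ⟨(toEuclideanCLM (𝕜 := ℝ) A).continuous.measurable, ?_⟩
  have hdet : LinearMap.det (toEuclideanLin A) = A.det := by
    rw [toEuclideanLin, toLpLin_eq_toLin, LinearMap.det_toLin]
  have h := Measure.map_linearMap_addHaar_eq_smul_addHaar
    (volume : Measure (EuclideanSpace ℝ ι)) (f := toEuclideanLin A)
    (by rw [hdet]; exact abs_ne_zero.1 (by simp [hA]))
  rw [hdet, abs_inv, hA, inv_one, ENNReal.ofReal_one, one_smul] at h
  exact h

theorem toEuclideanCLM_mul_apply (A P : Matrix ι ι ℝ) (z : EuclideanSpace ℝ ι) :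
    toEuclideanCLM (𝕜 := ℝ) (A * P) z =
      toEuclideanCLM (𝕜 := ℝ) A (toEuclideanCLM (𝕜 := ℝ) P z) := by
  rw [map_mul, mul_apply_eq_comp]

theorem inner_toEuclideanCLM_conj (A P : Matrix ι ι ℝ) (z : EuclideanSpace ℝ ι) :
    ⟪toEuclideanCLM (𝕜 := ℝ) A z, toEuclideanCLM (𝕜 := ℝ) P (toEuclideanCLM (𝕜 := ℝ) A z)⟫ =
      ⟪z, toEuclideanCLM (𝕜 := ℝ) (Aᴴ * P * A) z⟫ := by
  rw [Matrix.mul_assoc, toEuclideanCLM_mul_apply, toEuclideanCLM_mul_apply, ← star_eq_conjTranspose,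
    map_star, ContinuousLinearMap.star_eq_adjoint, ContinuousLinearMap.adjoint_inner_right]

theorem toEuclideanCLM_inv_apply_apply (hA : IsUnit A.det) (z : EuclideanSpace ℝ ι) :
    toEuclideanCLM (𝕜 := ℝ) A⁻¹ (toEuclideanCLM (𝕜 := ℝ) A z) = z := by
  rw [← toEuclideanCLM_mul_apply, nonsing_inv_mul A hA, map_one, one_apply_eq_self]

-- `A` is the inverse square root of `P`, rescaled to have determinant one.
open scoped MatrixOrder in
theorem exists_posDef_det_eq_one_mul_mul_eq_smul_one [Nonempty ι] (hP : P.PosDef) :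
    ∃ A : Matrix ι ι ℝ, A.PosDef ∧ A.det = 1 ∧
      A * P * A = P.det ^ (1 / Fintype.card ι : ℝ) • 1 := by
  obtain ⟨S, hS, rfl⟩ : ∃ S : Matrix ι ι ℝ, S.PosDef ∧ S * S = P :=
    ⟨CFC.sqrt P, (IsStrictlyPositive.sqrt P hP.isStrictlyPositive).posDef,
      CFC.sqrt_mul_sqrt_self P hP.posSemidef.nonneg⟩
  have hunit : IsUnit S.det := hS.det_pos.ne'.isUnit
  set d : ℝ := S.det ^ (1 / Fintype.card ι : ℝ) with hd
  have hdpow : d ^ Fintype.card ι = S.det := by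
    rw [hd, one_div, Real.rpow_inv_natCast_pow hS.det_pos.le Fintype.card_ne_zero]
  refine ⟨d • S⁻¹, hS.inv.smul (Real.rpow_pos_of_pos hS.det_pos _), ?_, ?_⟩
  · rw [det_smul, hdpow, ← det_mul, mul_nonsing_inv S hunit, det_one]
  · rw [det_mul, Real.mul_rpow hS.det_pos.le hS.det_pos.le, ← hd, smul_mul_assoc, mul_smul_comm,
      smul_mul_assoc, smul_smul, ← Matrix.mul_assoc, nonsing_inv_mul S hunit, Matrix.one_mul,
      mul_nonsing_inv S hunit]

theorem exists_det_add_smul_one_rpow_lt (P : Matrix ι ι ℝ) {p c : ℝ} (hp : 0 ≤ p)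
    (hc : P.det ^ p < c) : ∃ ε > (0 : ℝ), (P + ε • 1).det ^ p < c := by
  have hcont : Continuous fun ε : ℝ => (P + ε • (1 : Matrix ι ι ℝ)).det ^ p :=
    (Continuous.matrix_det (by fun_prop)).rpow_const fun _ => .inr hp
  have hlt : ∀ᶠ ε : ℝ in 𝓝[>] 0, (P + ε • 1).det ^ p < c :=
    ((hcont.tendsto' 0 (P.det ^ p) (by simp)).mono_left
      nhdsWithin_le_nhds).eventually_lt_const hc
  exact (hlt.and self_mem_nhdsWithin).exists.imp fun _ => And.symm

end EuclideanMatrix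

section Hessian

variable {n : ℕ} {u : EuclideanSpace ℝ (Fin n) → ℝ} {x : EuclideanSpace ℝ (Fin n)}

theorem hess_apply (hu' : DifferentiableAt ℝ (fderiv ℝ u) x) (i j : Fin n) :
    hess u x i j =
      fderiv ℝ (fderiv ℝ u) x (EuclideanSpace.single i 1) (EuclideanSpace.single j 1) := by
  rw [hess, of_apply, fderiv_clm_apply hu' (differentiableAt_const _)]
  simp

theorem inner_toEuclideanCLM_hess (hu' : DifferentiableAt ℝ (fderiv ℝ u) x)
    (y : EuclideanSpace ℝ (Fin n)) :
    ⟪y, toEuclideanCLM (𝕜 := ℝ) (hess u x) y⟫ = fderiv ℝ (fderiv ℝ u) x y y := by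
  have hy : y = ∑ i, y i • EuclideanSpace.single i 1 := by
    simpa using ((EuclideanSpace.basisFun (Fin n) ℝ).sum_repr y).symm
  conv_rhs => rw [hy]
  simp only [inner_toEuclideanCLM, dotProduct, mulVec, hess_apply hu', Finset.mul_sum, map_sum,
    map_smul, _root_.sum_apply, _root_.smul_apply, smul_eq_mul]
  rw [Finset.sum_comm]
  exact Finset.sum_congr rfl fun i _ => Finset.sum_congr rfl fun j _ => by ring

theorem isHermitian_hess (hu : ∀ᶠ z in 𝓝 x, DifferentiableAt ℝ u z)
    (hu' : DifferentiableAt ℝ (fderiv ℝ u) x) : (hess u x).IsHermitian := by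
  ext i j
  rw [conjTranspose_apply, star_trivial, hess_apply hu', hess_apply hu']
  exact second_derivative_symmetric_of_eventually (hu.mono fun _ h => h.hasFDerivAt)
    hu'.hasFDerivAt _ _

theorem isLittleO_delta2_sub_inner_hess (hu : ∀ᶠ z in 𝓝 x, DifferentiableAt ℝ u z)
    (hu' : DifferentiableAt ℝ (fderiv ℝ u) x) :
    (fun y => delta2 u x y - ⟪y, toEuclideanCLM (𝕜 := ℝ) (hess u x) y⟫)
      =o[𝓝 0] fun y => ‖y‖ ^ 2 := by
  simpa only [inner_toEuclideanCLM_hess hu', delta2, smul_eq_mul] using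
    isLittleO_symmetric_second_difference hu hu'

theorem isLittleO_delta2_toEuclideanCLM_sub_inner (hu : ∀ᶠ z in 𝓝 x, DifferentiableAt ℝ u z)
    (hu' : DifferentiableAt ℝ (fderiv ℝ u) x) (A : Matrix (Fin n) (Fin n) ℝ) :
    (fun z => delta2 u x (toEuclideanCLM (𝕜 := ℝ) A z) -
      ⟪z, toEuclideanCLM (𝕜 := ℝ) (Aᴴ * hess u x * A) z⟫) =o[𝓝 0] fun z => ‖z‖ ^ 2 := by
  set T := toEuclideanCLM (𝕜 := ℝ) A with hT
  have h := (isLittleO_delta2_sub_inner_hess hu hu').comp_tendsto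
    (T.continuous.tendsto' 0 0 (map_zero T))
  refine (h.congr_left fun z => ?_).trans_isBigO ((T.isBigO_id (𝓝 0)).norm_norm.pow 2)
  rw [Function.comp_apply, hT, inner_toEuclideanCLM_conj]

theorem exists_eventually_delta2_toEuclideanCLM_le (hu : ∀ᶠ z in 𝓝 x, DifferentiableAt ℝ u z)
    (hu' : DifferentiableAt ℝ (fderiv ℝ u) x) (A : Matrix (Fin n) (Fin n) ℝ) :
    ∃ c : ℝ, ∀ᶠ z in 𝓝 0, delta2 u x (toEuclideanCLM (𝕜 := ℝ) A z) ≤ c * ‖z‖ ^ 2 := by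
  set M := toEuclideanCLM (𝕜 := ℝ) (Aᴴ * hess u x * A)
  refine ⟨1 + ‖M‖, ?_⟩
  filter_upwards [(isLittleO_delta2_toEuclideanCLM_sub_inner hu hu' A).def one_pos] with z hz
  have hM : ⟪z, M z⟫ ≤ ‖M‖ * ‖z‖ ^ 2 := calc
    ⟪z, M z⟫ ≤ ‖z‖ * ‖M z‖ := real_inner_le_norm _ _
    _ ≤ ‖z‖ * (‖M‖ * ‖z‖) := by gcongr; exact M.le_opNorm z
    _ = ‖M‖ * ‖z‖ ^ 2 := by ring
  rw [Real.norm_eq_abs, norm_pow, norm_norm] at hz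
  linarith [le_abs_self (delta2 u x (toEuclideanCLM (𝕜 := ℝ) A z) - ⟪z, M z⟫)]

end Hessian

section ConvexSecondDifference

variable {n : ℕ} {u : EuclideanSpace ℝ (Fin n) → ℝ}

theorem continuous_delta2 (hu : Continuous u) (x : EuclideanSpace ℝ (Fin n)) :
    Continuous (delta2 u x) := by
  unfold delta2
  fun_prop

theorem delta2_le_of_lipschitzWith {K : ℝ≥0} (hLip : LipschitzWith K u)
    (x y : EuclideanSpace ℝ (Fin n)) : delta2 u x y ≤ 2 * K * ‖y‖ := by
  have hadd := hLip.dist_le_mul (x + y) x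
  have hsub := hLip.dist_le_mul (x - y) x
  rw [dist_self_add_left, Real.dist_eq] at hadd
  rw [dist_self_sub_left, Real.dist_eq] at hsub
  unfold delta2
  linarith [le_abs_self (u (x + y) - u x), le_abs_self (u (x - y) - u x)]

theorem delta2_nonneg (hconv : ConvexOn ℝ Set.univ u) (x y : EuclideanSpace ℝ (Fin n)) :
    0 ≤ delta2 u x y := by
  have h := hconv.2 (Set.mem_univ (x + y)) (Set.mem_univ (x - y)) (show (0 : ℝ) ≤ 1 / 2 by norm_num)
    (show (0 : ℝ) ≤ 1 / 2 by norm_num) (by norm_num)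
  rw [show (1 / 2 : ℝ) • (x + y) + (1 / 2 : ℝ) • (x - y) = x by module, smul_eq_mul,
    smul_eq_mul] at h
  unfold delta2
  linarith

theorem delta2_smul_le (hconv : ConvexOn ℝ Set.univ u) (x y : EuclideanSpace ℝ (Fin n)) {t : ℝ}
    (ht : 0 ≤ t) (ht' : t ≤ 1) : delta2 u x (t • y) ≤ t * delta2 u x y := by
  have hadd := hconv.2 (Set.mem_univ (x + y)) (Set.mem_univ x) ht (sub_nonneg.2 ht') (by ring)
  have hsub := hconv.2 (Set.mem_univ (x - y)) (Set.mem_univ x) ht (sub_nonneg.2 ht') (by ring)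
  rw [show t • (x + y) + (1 - t) • x = x + t • y by module, smul_eq_mul, smul_eq_mul] at hadd
  rw [show t • (x - y) + (1 - t) • x = x - t • y by module, smul_eq_mul, smul_eq_mul] at hsub
  unfold delta2
  linarith

theorem mul_min_sq_le_delta2_map (hconv : ConvexOn ℝ Set.univ u) (x : EuclideanSpace ℝ (Fin n))
    (T : EuclideanSpace ℝ (Fin n) →L[ℝ] EuclideanSpace ℝ (Fin n))
    {c ρ : ℝ} (hρ : 0 < ρ) (hnear : ∀ z, ‖z‖ ≤ ρ → c * ‖z‖ ^ 2 ≤ delta2 u x (T z))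
    (z : EuclideanSpace ℝ (Fin n)) : c * min ‖z‖ ρ ^ 2 ≤ delta2 u x (T z) := by
  rcases le_or_gt ‖z‖ ρ with hz | hz
  · rw [min_eq_left hz]
    exact hnear z hz
  · have ht : ρ / ‖z‖ ≤ 1 := (div_le_one (hρ.trans hz)).2 hz.le
    have hnorm : ‖(ρ / ‖z‖) • z‖ = ρ := by
      rw [norm_smul, Real.norm_of_nonneg (by positivity), div_mul_cancel₀ _ (hρ.trans hz).ne']
    calc c * min ‖z‖ ρ ^ 2 = c * ‖(ρ / ‖z‖) • z‖ ^ 2 := by rw [min_eq_right hz.le, hnorm]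
      _ ≤ delta2 u x (T ((ρ / ‖z‖) • z)) := hnear _ hnorm.le
      _ ≤ ρ / ‖z‖ * delta2 u x (T z) := by
        rw [map_smul]
        exact delta2_smul_le hconv x _ (by positivity) ht
      _ ≤ delta2 u x (T z) := mul_le_of_le_one_left (delta2_nonneg hconv x _) ht

theorem posSemidef_hess {x : EuclideanSpace ℝ (Fin n)} (hconv : ConvexOn ℝ Set.univ u)
    (hu : ∀ᶠ z in 𝓝 x, DifferentiableAt ℝ u z) (hu' : DifferentiableAt ℝ (fderiv ℝ u) x) :
    (hess u x).PosSemidef := by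
  refine .of_dotProduct_mulVec_nonneg (isHermitian_hess hu hu') fun v => ?_
  set y : EuclideanSpace ℝ (Fin n) := WithLp.toLp 2 v
  set q := ⟪y, toEuclideanCLM (𝕜 := ℝ) (hess u x) y⟫ with hq
  have hray : Tendsto (fun t : ℝ => t • y) (𝓝[≠] 0) (𝓝 0) :=
    (Continuous.tendsto' (by fun_prop) 0 0 (zero_smul ℝ y)).mono_left nhdsWithin_le_nhds
  have hsmall : (fun t : ℝ => delta2 u x (t • y) - t ^ 2 * q) =o[𝓝[≠] 0] fun t => t ^ 2 := by
    refine (((isLittleO_delta2_sub_inner_hess hu hu').comp_tendsto hray).congr_left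
      fun t => ?_).trans_isBigO (.of_bound (‖y‖ ^ 2) (.of_forall fun t => ?_))
    · simp [hq, inner_smul_left, inner_smul_right, sq, mul_assoc]
    · simp [norm_smul, mul_pow, mul_comm]
  have hlim : Tendsto (fun t : ℝ => delta2 u x (t • y) / t ^ 2) (𝓝[≠] 0) (𝓝 q) := by
    refine ((zero_add q) ▸ hsmall.tendsto_div_nhds_zero.add_const q).congr' ?_
    filter_upwards [self_mem_nhdsWithin] with t ht
    have : t ≠ 0 := ht
    field_simp
    ring
  have hq_nonneg : 0 ≤ q := ge_of_tendsto' hlim fun t =>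
    div_nonneg (delta2_nonneg hconv x _) (by positivity)
  simpa [hq, inner_toEuclideanCLM] using hq_nonneg

end ConvexSecondDifference

section OptimalMatrix

variable {n : ℕ} [NeZero n] {u : EuclideanSpace ℝ (Fin n) → ℝ} {x : EuclideanSpace ℝ (Fin n)}
  {c : ℝ}

theorem exists_posDef_eventually_delta2_le (hconv : ConvexOn ℝ Set.univ u)
    (hu : ∀ᶠ z in 𝓝 x, DifferentiableAt ℝ u z) (hu' : DifferentiableAt ℝ (fderiv ℝ u) x)
    (hc : (hess u x).det ^ (1 / n : ℝ) < c) :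
    ∃ A : Matrix (Fin n) (Fin n) ℝ, A.PosDef ∧ A.det = 1 ∧
      ∀ᶠ z in 𝓝 0, delta2 u x (toEuclideanCLM (𝕜 := ℝ) A z) ≤ c * ‖z‖ ^ 2 := by
  obtain ⟨ε, hε, hεc⟩ := exists_det_add_smul_one_rpow_lt _ (by positivity) hc
  obtain ⟨A, hA, hdet, hconj⟩ := exists_posDef_det_eq_one_mul_mul_eq_smul_one
    (PosDef.posSemidef_add (posSemidef_hess hconv hu hu') (PosDef.one.smul hε))
  rw [Fintype.card_fin] at hconj
  set l := (hess u x + ε • 1).det ^ (1 / n : ℝ)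
  refine ⟨A, hA, hdet, ?_⟩
  filter_upwards [(isLittleO_delta2_toEuclideanCLM_sub_inner hu hu' A).def (sub_pos.2 hεc)]
    with z hz
  have hquad : ⟪z, toEuclideanCLM (𝕜 := ℝ) (Aᴴ * hess u x * A) z⟫ ≤ l * ‖z‖ ^ 2 := by
    have hsplit : Aᴴ * hess u x * A = l • 1 - ε • (Aᴴ * 1 * A) := by
      rw [← hconj, hA.isHermitian.eq]
      noncomm_ring
    rw [hsplit, map_sub, map_smul, map_smul, map_one, _root_.sub_apply, _root_.smul_apply,
      _root_.smul_apply, inner_sub_right, inner_smul_right, inner_smul_right,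
      ← inner_toEuclideanCLM_conj, map_one, one_apply_eq_self, one_apply_eq_self,
      real_inner_self_eq_norm_sq, real_inner_self_eq_norm_sq]
    exact sub_le_self _ (by positivity)
  rw [Real.norm_eq_abs, norm_pow, norm_norm] at hz
  linarith [le_of_abs_le hz]

theorem exists_posDef_mul_min_sq_le_delta2 (hconv : ConvexOn ℝ Set.univ u)
    (hu : ∀ᶠ z in 𝓝 x, DifferentiableAt ℝ u z) (hu' : DifferentiableAt ℝ (fderiv ℝ u) x)
    (hdet : (hess u x).det ≠ 0) (hc : c < (hess u x).det ^ (1 / n : ℝ)) :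
    ∃ A : Matrix (Fin n) (Fin n) ℝ, A.PosDef ∧ A.det = 1 ∧
      ∃ ρ > 0, ∀ z, c * min ‖z‖ ρ ^ 2 ≤ delta2 u x (toEuclideanCLM (𝕜 := ℝ) A z) := by
  obtain ⟨A, hA, hdetA, hconj⟩ := exists_posDef_det_eq_one_mul_mul_eq_smul_one
    ((posSemidef_hess hconv hu hu').posDef_iff_det_ne_zero.2 hdet)
  rw [Fintype.card_fin] at hconj
  have hnear : ∀ᶠ z in 𝓝 0, c * ‖z‖ ^ 2 ≤ delta2 u x (toEuclideanCLM (𝕜 := ℝ) A z) := by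
    filter_upwards [(isLittleO_delta2_toEuclideanCLM_sub_inner hu hu' A).def (sub_pos.2 hc)]
      with z hz
    rw [hA.isHermitian.eq, hconj, map_smul, map_one, _root_.smul_apply, one_apply_eq_self,
      inner_smul_right, real_inner_self_eq_norm_sq, Real.norm_eq_abs, norm_pow, norm_norm] at hz
    linarith [neg_le_of_abs_le hz]
  obtain ⟨ρ, hρ, hball⟩ := Metric.nhds_basis_closedBall.eventually_iff.1 hnear
  exact ⟨A, hA, hdetA, ρ, hρ, mul_min_sq_le_delta2_map hconv x _ hρ fun z hz =>
    hball (mem_closedBall_zero_iff.2 hz)⟩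

end OptimalMatrix

section FractionalMongeAmpere

variable {n : ℕ} {u : EuclideanSpace ℝ (Fin n) → ℝ} {x : EuclideanSpace ℝ (Fin n)} {s c r : ℝ}
  {K : ℝ≥0} {A B : Matrix (Fin n) (Fin n) ℝ}

/-- The fractional Monge–Ampère operator `D_s u(x)`: the infimum of `L_A u(x)` over the positive
definite matrices `A` of determinant one. -/
noncomputable def fracMongeAmpere (s : ℝ) (u : EuclideanSpace ℝ (Fin n) → ℝ)
    (x : EuclideanSpace ℝ (Fin n)) : ℝ :=
  sInf {z | ∃ A : Matrix (Fin n) (Fin n) ℝ, A.PosDef ∧ A.det = 1 ∧ z = LA s A u x}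

theorem LA_eq_integral_comp (hA : A.det = 1) : LA s A u x =
    1 / 2 * ∫ z, delta2 u x (toEuclideanCLM (𝕜 := ℝ) A z) / ‖z‖ ^ (n + 2 * s) := by
  set T := toEuclideanCLM (𝕜 := ℝ) A
  have hinv (z) : toEuclideanCLM (𝕜 := ℝ) A⁻¹ (T z) = z :=
    toEuclideanCLM_inv_apply_apply (by simp [hA]) z
  have hemb : MeasurableEmbedding T :=
    T.continuous.measurableEmbedding (Function.LeftInverse.injective hinv)
  rw [LA, ← (measurePreserving_toEuclideanCLM (by simp [hA])).integral_comp hemb]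
  refine congrArg _ (integral_congr_ae (.of_forall fun z => ?_))
  change delta2 u x (T z) / ‖toEuclideanCLM (𝕜 := ℝ) A⁻¹ (T z)‖ ^ (n + 2 * s) = _
  rw [hinv]

theorem LA_nonneg (hconv : ConvexOn ℝ Set.univ u) : 0 ≤ LA s A u x :=
  mul_nonneg (by norm_num)
    (integral_nonneg fun y => div_nonneg (delta2_nonneg hconv x y) (by positivity))

theorem fracMongeAmpere_le (hconv : ConvexOn ℝ Set.univ u) (hA : A.PosDef) (hdet : A.det = 1) :
    fracMongeAmpere s u x ≤ LA s A u x :=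
  csInf_le ⟨0, by rintro _ ⟨A, -, -, rfl⟩; exact LA_nonneg hconv⟩ ⟨A, hA, hdet, rfl⟩

theorem le_fracMongeAmpere {b : ℝ}
    (hb : ∀ A : Matrix (Fin n) (Fin n) ℝ, A.det = 1 → b ≤ LA s A u x) :
    b ≤ fracMongeAmpere s u x :=
  le_csInf ⟨_, 1, .one, det_one, rfl⟩ (by rintro _ ⟨A, -, hA, rfl⟩; exact hb A hA)

theorem delta2_toEuclideanCLM_le (hLip : LipschitzWith K u) (x z : EuclideanSpace ℝ (Fin n)) :
    delta2 u x (toEuclideanCLM (𝕜 := ℝ) A z) ≤ 2 * K * ‖toEuclideanCLM (𝕜 := ℝ) A‖ * ‖z‖ :=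
  calc delta2 u x (toEuclideanCLM (𝕜 := ℝ) A z)
      ≤ 2 * K * ‖toEuclideanCLM (𝕜 := ℝ) A z‖ := delta2_le_of_lipschitzWith hLip x _
    _ ≤ 2 * K * (‖toEuclideanCLM (𝕜 := ℝ) A‖ * ‖z‖) := by
      gcongr
      exact (toEuclideanCLM (𝕜 := ℝ) A).le_opNorm z
    _ = _ := by ring

theorem tendsto_rpow_two_sub_two_mul (hr : 0 < r) :
    Tendsto (fun s : ℝ => r ^ (2 - 2 * s)) (𝓝 1) (𝓝 1) := by
  have h : Continuous fun s : ℝ => r ^ (2 - 2 * s) := by fun_prop (disch := positivity)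
  exact h.tendsto' 1 1 (by norm_num)

theorem tendsto_one_sub_mul_rpow_div (hr : 0 < r) (b : ℝ) :
    Tendsto (fun s : ℝ => (1 - s) * (b * (r ^ (1 - 2 * s) / (2 * s - 1)))) (𝓝 1) (𝓝 0) := by
  have h : ContinuousAt (fun s : ℝ => (1 - s) * (b * (r ^ (1 - 2 * s) / (2 * s - 1)))) 1 := by
    fun_prop (disch := first | positivity | norm_num)
  simpa using h.tendsto

variable [NeZero n]

variable (n) in
theorem surfOmega_eq_mul_volume_ball :
    surfOmega n = n * volume.real (Metric.ball (0 : EuclideanSpace ℝ (Fin n)) 1) := by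
  have hn : (0 : ℝ) < n := mod_cast NeZero.pos n
  have : 0 < Real.Gamma (n / 2) := Real.Gamma_pos_of_pos (by positivity)
  have hpi : √Real.pi ^ n = Real.pi ^ (n / 2 : ℝ) := by
    rw [Real.sqrt_eq_rpow, ← Real.rpow_natCast, ← Real.rpow_mul Real.pi_pos.le, one_div_mul_eq_div]
  rw [measureReal_def, EuclideanSpace.volume_ball, Fintype.card_fin, ENNReal.ofReal_one, one_pow,
    one_mul, hpi, Real.Gamma_add_one (by positivity), ENNReal.toReal_ofReal (by positivity),
    surfOmega]
  field_simp

variable (n) in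
theorem surfOmega_pos : 0 < surfOmega n := by
  rw [surfOmega_eq_mul_volume_ball]
  have := Metric.measure_ball_pos volume (0 : EuclideanSpace ℝ (Fin n)) one_pos
  exact mul_pos (mod_cast NeZero.pos n) (ENNReal.toReal_pos this.ne' measure_ball_lt_top.ne)

theorem one_sub_mul_LA_le (hs : s ∈ Set.Ioo (1 / 2) 1) (hconv : ConvexOn ℝ Set.univ u)
    (hLip : LipschitzWith K u) (hA : A.det = 1) (hr : 0 < r)
    (hnear : ∀ z, ‖z‖ ≤ r → delta2 u x (toEuclideanCLM (𝕜 := ℝ) A z) ≤ c * ‖z‖ ^ 2) :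
    (1 - s) * LA s A u x ≤ surfOmega n / 4 * (c * r ^ (2 - 2 * s)) + (1 - s) *
      (surfOmega n * (K * ‖toEuclideanCLM (𝕜 := ℝ) A‖) * (r ^ (1 - 2 * s) / (2 * s - 1))) := by
  have hmeas : AEStronglyMeasurable (fun z => delta2 u x (toEuclideanCLM (𝕜 := ℝ) A z)) volume :=
    ((continuous_delta2 hLip.continuous x).comp (map_continuous _)).aestronglyMeasurable
  have h := integral_div_norm_rpow_le hs hr hmeas (fun z => delta2_nonneg hconv x _) hnear
    fun z _ => delta2_toEuclideanCLM_le hLip x z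
  rw [finrank_euclideanSpace_fin, ← surfOmega_eq_mul_volume_ball] at h
  have hs' : 0 < 1 - s := sub_pos.2 hs.2
  calc (1 - s) * LA s A u x
      ≤ (1 - s) * (1 / 2 * (surfOmega n * (c * (r ^ (2 - 2 * s) / (2 - 2 * s)) +
          2 * K * ‖toEuclideanCLM (𝕜 := ℝ) A‖ * (r ^ (1 - 2 * s) / (2 * s - 1))))) := by
        rw [LA_eq_integral_comp hA]
        gcongr
    _ = _ := by
      rw [show 2 - 2 * s = 2 * (1 - s) by ring]
      field_simp
      ring

theorem integrable_delta2_div_norm_rpow (hs : s ∈ Set.Ioo (1 / 2) 1)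
    (hconv : ConvexOn ℝ Set.univ u) (hLip : LipschitzWith K u)
    (hu : ∀ᶠ z in 𝓝 x, DifferentiableAt ℝ u z) (hu' : DifferentiableAt ℝ (fderiv ℝ u) x)
    (A : Matrix (Fin n) (Fin n) ℝ) :
    Integrable fun z => delta2 u x (toEuclideanCLM (𝕜 := ℝ) A z) / ‖z‖ ^ (n + 2 * s) := by
  obtain ⟨c, hc⟩ := exists_eventually_delta2_toEuclideanCLM_le hu hu' A
  obtain ⟨r, hr, hnear⟩ := Metric.nhds_basis_closedBall.eventually_iff.1 hc
  have h := integrable_div_norm_rpow hs hr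
    ((continuous_delta2 hLip.continuous x).comp (map_continuous _)).aestronglyMeasurable
    (fun z => delta2_nonneg hconv x _) (fun z hz => hnear (mem_closedBall_zero_iff.2 hz))
    (fun z _ => delta2_toEuclideanCLM_le hLip x z) (μ := volume)
  rwa [finrank_euclideanSpace_fin] at h

theorem le_one_sub_mul_LA (hs : s ∈ Set.Ioo (1 / 2) 1) (hB : B.det = 1) (hA : A.det = 1)
    (hc : 0 ≤ c) (hr : 0 ≤ r)
    (hmin : ∀ z, c * min ‖z‖ r ^ 2 ≤ delta2 u x (toEuclideanCLM (𝕜 := ℝ) B z))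
    (hint : Integrable fun z => delta2 u x (toEuclideanCLM (𝕜 := ℝ) A z) / ‖z‖ ^ (n + 2 * s)) :
    surfOmega n / 4 * (c * r ^ (2 - 2 * s)) ≤ (1 - s) * LA s A u x := by
  have hpres : MeasurePreserving (toEuclideanCLM (𝕜 := ℝ) (B⁻¹ * A)) volume volume :=
    measurePreserving_toEuclideanCLM (by simp [hA, hB])
  have hle (z) : c * min ‖toEuclideanCLM (𝕜 := ℝ) (B⁻¹ * A) z‖ r ^ 2 ≤
      delta2 u x (toEuclideanCLM (𝕜 := ℝ) A z) := by
    have h := hmin (toEuclideanCLM (𝕜 := ℝ) (B⁻¹ * A) z)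
    rwa [← toEuclideanCLM_mul_apply B, mul_nonsing_inv_cancel_left B A (by simp [hB])] at h
  have h := le_integral_div_norm_rpow hs hpres hc hr hle (by rwa [finrank_euclideanSpace_fin])
  rw [finrank_euclideanSpace_fin, ← surfOmega_eq_mul_volume_ball] at h
  have hs' : 0 < 1 - s := sub_pos.2 hs.2
  calc surfOmega n / 4 * (c * r ^ (2 - 2 * s))
      = (1 - s) * (1 / 2 * (c * (surfOmega n * (r ^ (2 - 2 * s) / (2 - 2 * s))))) := by
        rw [show 2 - 2 * s = 2 * (1 - s) by ring]
        field_simp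
        ring
    _ ≤ (1 - s) * LA s A u x := by rw [LA_eq_integral_comp hA]; gcongr

theorem eventually_one_sub_mul_fracMongeAmpere_lt (hconv : ConvexOn ℝ Set.univ u)
    (hu : ∀ᶠ z in 𝓝 x, DifferentiableAt ℝ u z) (hu' : DifferentiableAt ℝ (fderiv ℝ u) x)
    (hLip : LipschitzWith K u) {b : ℝ} (hb : surfOmega n / 4 * (hess u x).det ^ (1 / n : ℝ) < b) :
    ∀ᶠ s in 𝓝[<] 1, (1 - s) * fracMongeAmpere s u x < b := by
  have hω : 0 < surfOmega n / 4 := div_pos (surfOmega_pos n) four_pos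
  obtain ⟨c, hdetc, hcb⟩ := exists_between ((lt_div_iff₀' hω).2 hb)
  obtain ⟨A, hA, hdet, hc⟩ := exists_posDef_eventually_delta2_le hconv hu hu' hdetc
  obtain ⟨r, hr, hnear⟩ := Metric.nhds_basis_closedBall.eventually_iff.1 hc
  have hlim : Tendsto (fun s : ℝ => surfOmega n / 4 * (c * r ^ (2 - 2 * s)) + (1 - s) *
      (surfOmega n * (K * ‖toEuclideanCLM (𝕜 := ℝ) A‖) * (r ^ (1 - 2 * s) / (2 * s - 1))))
      (𝓝 1) (𝓝 (surfOmega n / 4 * c)) := by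
    simpa using (((tendsto_rpow_two_sub_two_mul hr).const_mul c).const_mul (surfOmega n / 4)).add
      (tendsto_one_sub_mul_rpow_div hr (surfOmega n * (K * ‖toEuclideanCLM (𝕜 := ℝ) A‖)))
  filter_upwards [(hlim.mono_left nhdsWithin_le_nhds).eventually_lt_const ((lt_div_iff₀' hω).1 hcb),
    Ioo_mem_nhdsLT (show (1 / 2 : ℝ) < 1 by norm_num)] with s hlt hs
  refine lt_of_le_of_lt ?_ hlt
  calc (1 - s) * fracMongeAmpere s u x
      ≤ (1 - s) * LA s A u x :=
        mul_le_mul_of_nonneg_left (fracMongeAmpere_le hconv hA hdet) (sub_nonneg.2 hs.2.le)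
    _ ≤ _ := one_sub_mul_LA_le hs hconv hLip hdet hr fun z hz =>
        hnear (mem_closedBall_zero_iff.2 hz)

theorem eventually_lt_one_sub_mul_fracMongeAmpere (hconv : ConvexOn ℝ Set.univ u)
    (hu : ∀ᶠ z in 𝓝 x, DifferentiableAt ℝ u z) (hu' : DifferentiableAt ℝ (fderiv ℝ u) x)
    (hLip : LipschitzWith K u) {a : ℝ} (ha : a < surfOmega n / 4 * (hess u x).det ^ (1 / n : ℝ)) :
    ∀ᶠ s in 𝓝[<] 1, a < (1 - s) * fracMongeAmpere s u x := by
  have hω : 0 < surfOmega n / 4 := div_pos (surfOmega_pos n) four_pos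
  have hIoo := Ioo_mem_nhdsLT (show (1 / 2 : ℝ) < 1 by norm_num)
  rcases eq_or_ne (hess u x).det 0 with hzero | hdet
  · rw [hzero, Real.zero_rpow (by simp [NeZero.ne n]), mul_zero] at ha
    filter_upwards [hIoo] with s hs
    exact ha.trans_le (mul_nonneg (sub_nonneg.2 hs.2.le)
      (le_fracMongeAmpere fun _ _ => LA_nonneg hconv))
  have hdet_pos : 0 < (hess u x).det ^ (1 / n : ℝ) :=
    Real.rpow_pos_of_pos ((posSemidef_hess hconv hu hu').det_nonneg.lt_of_ne' hdet) _
  obtain ⟨c, hac, hc⟩ := exists_between (max_lt hdet_pos ((div_lt_iff₀' hω).2 ha))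
  obtain ⟨hc_pos, hac⟩ := max_lt_iff.1 hac
  obtain ⟨B, -, hB, ρ, hρ, hmin⟩ := exists_posDef_mul_min_sq_le_delta2 hconv hu hu' hdet hc
  have hlim : Tendsto (fun s : ℝ => surfOmega n / 4 * (c * ρ ^ (2 - 2 * s))) (𝓝 1)
      (𝓝 (surfOmega n / 4 * c)) := by
    simpa using ((tendsto_rpow_two_sub_two_mul hρ).const_mul c).const_mul (surfOmega n / 4)
  filter_upwards [(hlim.mono_left nhdsWithin_le_nhds).eventually_const_lt ((div_lt_iff₀' hω).1 hac),
    hIoo] with s hlt hs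
  have hs' : 0 < 1 - s := sub_pos.2 hs.2
  refine hlt.trans_le ((div_le_iff₀' hs').1 (le_fracMongeAmpere fun A hA => ?_))
  exact (div_le_iff₀' hs').2 (le_one_sub_mul_LA hs hB hA hc_pos.le hρ.le hmin
    (integrable_delta2_div_norm_rpow hs hconv hLip hu hu' A))

theorem stmt10_general (hconv : ConvexOn ℝ Set.univ u)
    (hu : ∀ᶠ z in 𝓝 x, DifferentiableAt ℝ u z) (hu' : DifferentiableAt ℝ (fderiv ℝ u) x)
    (hLip : LipschitzWith K u) :
    Tendsto (fun s => (1 - s) * fracMongeAmpere s u x) (𝓝[<] 1)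
      (𝓝 (surfOmega n / 4 * (hess u x).det ^ (1 / n : ℝ))) :=
  tendsto_order.2 ⟨fun _ => eventually_lt_one_sub_mul_fracMongeAmpere hconv hu hu' hLip,
    fun _ => eventually_one_sub_mul_fracMongeAmpere_lt hconv hu hu' hLip⟩

end FractionalMongeAmpere

theorem stmt10 (n : ℕ) (hn : 1 ≤ n) (u : EuclideanSpace ℝ (Fin n) → ℝ)
    (hconv : ConvexOn ℝ Set.univ u) (hC2 : ContDiff ℝ 2 u)
    (L : ℝ) (hLip : ∀ a b : EuclideanSpace ℝ (Fin n), |u a - u b| ≤ L * ‖a - b‖)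
    (x : EuclideanSpace ℝ (Fin n)) :
    Tendsto (fun s : ℝ => (1 - s) *
        sInf {z : ℝ | ∃ A : Matrix (Fin n) (Fin n) ℝ, A.PosDef ∧ A.det = 1 ∧ z = LA s A u x})
      (nhdsWithin 1 (Set.Ioo (1 / 2 : ℝ) 1))
      (nhds (surfOmega n / 4 * (hess u x).det ^ ((1 : ℝ) / n))) := by
  have : NeZero n := ⟨Nat.one_le_iff_ne_zero.1 hn⟩
  have hu' : Differentiable ℝ (fderiv ℝ u) :=
    (hC2.fderiv_right (m := 1) le_rfl).differentiable one_ne_zero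
  have hlim := stmt10_general hconv (.of_forall (hC2.differentiable two_ne_zero)) (hu' x)
    (.of_dist_le' fun a b => by rw [Real.dist_eq, dist_eq_norm]; exact hLip a b)
  exact hlim.mono_left (nhdsWithin_mono 1 fun s hs => hs.2)
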